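/- The ratio of the minimal to maximal temperature on the hexagonal torus at t=1 is 2^{-1/3}: b(e^{-2π/√3}) / a(e^{-2π/√3}) = 2^{-1/3}, where a(q) = ∑_{(k,l)∈ℤ²} q^{k²+kl+l²} and b(q) = ∑_{(k,l)∈ℤ²} q^{k²+kl+l²} e^{2πi(k-l)/3}. -/

import Mathlib

noncomputable section

/-- Theta-null `θ₂(q) = ∑_{k∈ℤ} q^{(k+1/2)²}`. -/
def theta2 (q : ℝ) : ℝ := ∑' k : ℤ, q ^ (((k : ℝ) + 1/2)^2)

/-- Theta-null `θ₃(q) = ∑_{k∈ℤ} q^{k²}`. -/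
def theta3 (q : ℝ) : ℝ := ∑' k : ℤ, q ^ (k^2)

/-- Theta-null `θ₄(q) = ∑_{k∈ℤ} (-1)^k q^{k²}`. -/
def theta4 (q : ℝ) : ℝ := ∑' k : ℤ, (-1 : ℝ) ^ k * q ^ (k^2)

/-- Jacobi theta function `θ₃(z,q) = ∑_{k∈ℤ} q^{k²} e^{2πikz}` (real-valued for real z, q∈(0,1)). -/
def jTheta3 (z q : ℝ) : ℝ :=
  (∑' k : ℤ, (q : ℂ) ^ (k^2) * Complex.exp (2 * Real.pi * Complex.I * k * z)).re

/-- Jacobi theta function as a complex number. -/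
def jTheta3C (z q : ℝ) : ℂ :=
  ∑' k : ℤ, (q : ℂ) ^ (k^2) * Complex.exp (2 * Real.pi * Complex.I * k * z)

/-- Gauss hypergeometric series `₂F₁(a,b;c;x)`. -/
def hyp2F1 (a b c x : ℝ) : ℝ :=
  ∑' n : ℕ, ((ascPochhammer ℝ n).eval a * (ascPochhammer ℝ n).eval b /
    (ascPochhammer ℝ n).eval c) * x ^ n / (n.factorial : ℝ)

/-- Borwein cubic theta function `a(q)`. -/
def borA (q : ℝ) : ℝ := ∑' p : ℤ × ℤ, q ^ (p.1^2 + p.1 * p.2 + p.2^2)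

/-- Borwein cubic theta function `b(q)` (real-valued). -/
def borB (q : ℝ) : ℝ :=
  (∑' p : ℤ × ℤ, (q : ℂ) ^ (p.1^2 + p.1 * p.2 + p.2^2) *
    Complex.exp (2 * Real.pi * Complex.I * (((p.1 : ℝ) - (p.2 : ℝ)) / 3))).re

/-- Borwein cubic theta function `c(q)`. -/
def borC (q : ℝ) : ℝ :=
  ∑' p : ℤ × ℤ, q ^ ((((p.1 : ℝ)) + 1/3)^2 + ((p.1 : ℝ) + 1/3) * ((p.2 : ℝ) + 1/3) +
    (((p.2 : ℝ)) + 1/3)^2)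

/-- Periodized Gaussian (heat kernel) on the torus ℝ²/(Sℤ²). -/
def heatK (S : Matrix.SpecialLinearGroup (Fin 2) ℝ) (t : ℝ) (z : Fin 2 → ℝ) : ℝ :=
  (1/t) * ∑' l : Fin 2 → ℤ,
    Real.exp (-(Real.pi / t) *
      (((S : Matrix (Fin 2) (Fin 2) ℝ).mulVec (fun i => (l i : ℝ) + z i) 0)^2 +
       ((S : Matrix (Fin 2) (Fin 2) ℝ).mulVec (fun i => (l i : ℝ) + z i) 1)^2))

end

/-!
Let `ϖ = 1 - ω` be the prime above `3` in the Eisenstein integers `ℤ[ω]`. If `A` and `C` are the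
sums of `q ^ N(x)` over the cosets `(ϖ)` and `1 + (ϖ)`, then `a = A + 2C`, `b = A - C` and
`c ^ 3 = 9C(A² + AC + C²)`, whence `a ^ 3 = b ^ 3 + c ^ 3`. For the last identity, `c` is the sum
of `q ^ (N(x) / 3)` over `1 + (ϖ)`, and multiplication by `ω` permutes the three classes modulo
`ϖ²` in this coset; so in the triple sum `c ^ 3` one may, at the cost of a factor `3`, prescribe
the class of the third variable. Prescribing it to make the sum of the three variables divisible by
`ϖ²`, the discrete Fourier transform of order three becomes, up to units, `3` times a bijection onto
the triples of Eisenstein integers with sum congruent to `-1` modulo `ϖ`, and it absorbs the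
denominator of `N(x) / 3`.

Poisson summation in one variable turns the series of `b(e^{-s})` and of `c(e^{-4π²/(3s)})` into the
same mixed series, so that `b(e^{-s}) = 2π/(√3 s) c(e^{-4π²/(3s)})`. The fixed point `s = 2π/√3` of
this duality gives `b = c`, hence `a ^ 3 = 2 b ^ 3`.
-/

open scoped ENNReal NNReal QuadraticAlgebra Real

/-- The ring `ℤ[ω]` of Eisenstein integers, where `ω² = -1 - ω`. -/
abbrev EisensteinInt := QuadraticAlgebra ℤ (-1) (-1)

namespace EisensteinInt

/-- The prime `ϖ = 1 - ω` above `3`; its residue field has three elements. -/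
def ϖ : EisensteinInt := 1 - ω

lemma ω_sq : (ω : EisensteinInt) ^ 2 = -1 - ω := by
  ext <;> simp [pow_two]

lemma norm_eq (x : EisensteinInt) : x.norm = x.re ^ 2 - x.re * x.im + x.im ^ 2 := by
  rw [QuadraticAlgebra.norm_def]; ring

lemma norm_ω : (ω : EisensteinInt).norm = 1 := by simp [norm_eq]

lemma norm_ϖ : ϖ.norm = 3 := by simp [norm_eq, ϖ]

lemma ϖ_mul (x : EisensteinInt) : ϖ * x = ⟨x.re + x.im, 2 * x.im - x.re⟩ := by
  ext <;> simp [ϖ, sub_mul]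
  ring

/-- Multiplication by `ω` as a permutation of the Eisenstein integers. -/
def mulω : EisensteinInt ≃ EisensteinInt where
  toFun x := ω * x
  invFun x := ω ^ 2 * x
  left_inv x := by linear_combination (ω - 1) * x * ω_sq
  right_inv x := by linear_combination (ω - 1) * x * ω_sq

lemma exists_eq_add_ϖ_mul (x : EisensteinInt) : ∃ (j : SignType) (y : EisensteinInt),
    x = j + ϖ * y := by
  have hmod : (x.re + x.im) % 3 = 0 ∨ (x.re + x.im) % 3 = 1 ∨ (x.re + x.im) % 3 = 2 := by lia
  rcases hmod with h | h | h
  · refine ⟨0, ⟨x.re - (x.re + x.im) / 3, (x.re + x.im) / 3⟩, ?_⟩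
    rw [ϖ_mul]; ext <;> simp; lia
  · refine ⟨1, ⟨x.re - 1 - (x.re + x.im) / 3, (x.re + x.im) / 3⟩, ?_⟩
    rw [ϖ_mul]; ext <;> simp; lia
  · refine ⟨-1, ⟨x.re - (x.re + x.im) / 3, (x.re + x.im) / 3 + 1⟩, ?_⟩
    rw [ϖ_mul]; ext <;> simp <;> lia

lemma eq_of_add_ϖ_mul_eq {i j : SignType} {y z : EisensteinInt}
    (h : (i : EisensteinInt) + ϖ * y = j + ϖ * z) : i = j := by
  have hre := congrArg QuadraticAlgebra.re h
  have him := congrArg QuadraticAlgebra.im h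
  simp only [ϖ_mul] at hre him
  cases i <;> cases j <;> simp at hre him ⊢ <;> lia

lemma add_ϖ_mul_injective (c : EisensteinInt) : Function.Injective fun y => c + ϖ * y := by
  intro y z h
  have h' : ϖ * y = ϖ * z := by simpa using h
  rw [ϖ_mul, ϖ_mul, QuadraticAlgebra.mk.injEq] at h'
  ext <;> lia

lemma sum_signType {M : Type*} [AddCommMonoid M] (f : SignType → M) :
    ∑ j, f j = f 0 + f (-1) + f 1 := by
  rw [SignType.univ_eq]; simp [add_assoc]

lemma hasSum_of_hasSum_coset {M : Type*} [AddCommMonoid M] [TopologicalSpace M] [ContinuousAdd M]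
    {f : EisensteinInt → M} {a : SignType → M}
    (h : ∀ j : SignType, HasSum (fun y => f (j + ϖ * y)) (a j)) : HasSum f (∑ j, a j) := by
  have hdisj : Pairwise (Function.onFun Disjoint
      fun j : SignType => Set.range fun y => (j : EisensteinInt) + ϖ * y) :=
    fun i j hij => Set.disjoint_range_iff.mpr fun y z hyz => hij (eq_of_add_ϖ_mul_eq hyz)
  have hcover : ⋃ j ∈ Finset.univ, Set.range (fun y => ((j : SignType) : EisensteinInt) + ϖ * y)
      = Set.univ := by
    refine Set.eq_univ_of_forall fun x => ?_
    obtain ⟨j, y, rfl⟩ := exists_eq_add_ϖ_mul x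
    simp only [Set.mem_iUnion]
    exact ⟨j, Finset.mem_univ j, y, rfl⟩
  have hsum := hasSum_sum_disjoint Finset.univ (hdisj.set_pairwise _)
    fun j _ => (add_ϖ_mul_injective j).hasSum_range_iff.mpr (h j)
  rwa [hcover, hasSum_subtype_iff_indicator, Set.indicator_univ] at hsum

/-- The sum of `f` over the coset `c + (m)` of a nonzero ideal `(m)`. -/
noncomputable def cosetSum (f : EisensteinInt → ℝ≥0∞) (m c : EisensteinInt) : ℝ≥0∞ :=
  ∑' y, f (c + m * y)

section cosetSum

variable {f : EisensteinInt → ℝ≥0∞}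

lemma tsum_eq_sum_cosetSum (f : EisensteinInt → ℝ≥0∞) :
    ∑' x, f x = ∑ j : SignType, cosetSum f ϖ j :=
  (hasSum_of_hasSum_coset fun _ => ENNReal.summable.hasSum).tsum_eq

lemma cosetSum_eq_sum_cosetSum_mul_ϖ (f : EisensteinInt → ℝ≥0∞) (m c : EisensteinInt) :
    cosetSum f m c = ∑ j : SignType, cosetSum f (m * ϖ) (c + m * j) := by
  simp only [cosetSum, tsum_eq_sum_cosetSum fun y => f (c + m * y), mul_add, add_assoc, mul_assoc]

lemma cosetSum_add_mul (f : EisensteinInt → ℝ≥0∞) (m c z : EisensteinInt) :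
    cosetSum f m (c + m * z) = cosetSum f m c := by
  simp only [cosetSum, add_assoc, ← mul_add]
  exact (Equiv.addLeft z).tsum_eq fun y => f (c + m * y)

lemma cosetSum_neg (hf : ∀ x, f (-x) = f x) (m c : EisensteinInt) :
    cosetSum f m (-c) = cosetSum f m c := by
  rw [cosetSum, ← (Equiv.neg EisensteinInt).tsum_eq]
  refine tsum_congr fun y => ?_
  rw [← hf, Equiv.neg_apply, mul_neg, ← neg_add, neg_neg]

lemma cosetSum_ω_mul (hf : ∀ x, f (ω * x) = f x) (m c : EisensteinInt) :
    cosetSum f m (ω * c) = cosetSum f m c := by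
  rw [cosetSum, ← mulω.tsum_eq]
  refine tsum_congr fun y => ?_
  rw [← hf (c + m * y), mulω, Equiv.coe_fn_mk, mul_left_comm m, mul_add]

lemma tsum_mul_of_periodic (f : EisensteinInt → ℝ≥0∞) {F : EisensteinInt → ℝ≥0∞}
    (hF : ∀ x y, F (x + ϖ * y) = F x) :
    ∑' x, f x * F x = ∑ j : SignType, cosetSum f ϖ j * F j := by
  simp only [tsum_eq_sum_cosetSum fun x => f x * F x, cosetSum, hF, ENNReal.tsum_mul_right]

/-- The elements congruent to `1` modulo `ϖ` are congruent modulo `ϖ²` to one of the units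
`1`, `ω`, `ω²`. -/
lemma cosetSum_ϖ_sq_one_add (hf : ∀ x, f (ω * x) = f x) (c : EisensteinInt) :
    cosetSum f (ϖ ^ 2) (1 + ϖ * c) = cosetSum f (ϖ ^ 2) 1 := by
  have hω : cosetSum f (ϖ ^ 2) ω = cosetSum f (ϖ ^ 2) 1 := by
    simpa using cosetSum_ω_mul hf (ϖ ^ 2) 1
  obtain ⟨j, z, rfl⟩ := exists_eq_add_ϖ_mul c
  rw [show 1 + ϖ * (j + ϖ * z) = 1 + ϖ * j + ϖ ^ 2 * z by ring, cosetSum_add_mul]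
  cases j
  · simp
  · rw [← hω]
    simp [ϖ]
  · have hmod : 1 + ϖ * 1 = ω * ω + ϖ ^ 2 * (-ω ^ 2) := by
      simp only [ϖ]
      linear_combination (ω ^ 2 - 3 * ω + 2) * ω_sq
    simp only [SignType.pos_eq_one, SignType.coe_one]
    rw [hmod, cosetSum_add_mul, cosetSum_ω_mul hf, hω]

lemma cosetSum_ϖ_one (hf : ∀ x, f (ω * x) = f x) :
    cosetSum f ϖ 1 = 3 * cosetSum f (ϖ ^ 2) 1 := by
  rw [cosetSum_eq_sum_cosetSum_mul_ϖ]
  simp only [← pow_two, cosetSum_ϖ_sq_one_add hf, sum_signType]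
  ring

lemma tsum_tsum_mul_cosetSum (hf : ∀ x, f (-x) = f x) :
    ∑' v, ∑' w, f v * (f w * cosetSum f ϖ (-1 - v - w)) =
      3 * cosetSum f ϖ 1 * (cosetSum f ϖ 0 ^ 2 + cosetSum f ϖ 0 * cosetSum f ϖ 1 +
        cosetSum f ϖ 1 ^ 2) := by
  have hperiod (c d y : EisensteinInt) (h : c = d + ϖ * y) : cosetSum f ϖ c = cosetSum f ϖ d := by
    rw [h, cosetSum_add_mul]
  have hinner (v : EisensteinInt) : ∑' w, f w * cosetSum f ϖ (-1 - v - w) =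
      ∑ j : SignType, cosetSum f ϖ j * cosetSum f ϖ (-1 - v - j) :=
    tsum_mul_of_periodic f fun x y => hperiod _ _ (-y) (by ring)
  have houter := tsum_mul_of_periodic f
    (F := fun v => ∑ j : SignType, cosetSum f ϖ j * cosetSum f ϖ (-1 - v - j))
    fun x y => Finset.sum_congr rfl fun j _ => by
      rw [hperiod (-1 - (x + ϖ * y) - j) (-1 - x - j) (-y) (by ring)]
  have h_three : (3 : EisensteinInt) = ϖ * (2 + ω) := by
    simp only [ϖ]
    linear_combination ω_sq
  have hneg : cosetSum f ϖ (-1) = cosetSum f ϖ 1 := cosetSum_neg hf ϖ 1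
  have hneg_two : cosetSum f ϖ (-1 - 1) = cosetSum f ϖ 1 :=
    hperiod _ _ (-(2 + ω)) (by linear_combination -h_three)
  have hneg_three : cosetSum f ϖ (-1 - 1 - 1) = cosetSum f ϖ 0 :=
    hperiod _ _ (-(2 + ω)) (by linear_combination -h_three)
  simp only [ENNReal.tsum_mul_left, hinner]
  rw [houter]
  simp only [sum_signType, SignType.coe_zero, SignType.coe_neg_one, SignType.coe_one, sub_zero,
    sub_neg_eq_add, neg_add_cancel, zero_sub, zero_add, sub_add_cancel, hneg, hneg_two,
    hneg_three]
  ring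

end cosetSum

/-- The Gaussian `exp (-s N(x))` on the Eisenstein integers; its values lie in `ℝ≥0∞` so that sums
may be rearranged freely. -/
noncomputable def gauss (s : ℝ) (x : EisensteinInt) : ℝ≥0∞ :=
  ENNReal.ofReal (Real.exp (-(s * x.norm)))

lemma gauss_neg (s : ℝ) (x : EisensteinInt) : gauss s (-x) = gauss s x := by
  simp [gauss, norm_eq]

lemma gauss_ω_mul (s : ℝ) (x : EisensteinInt) : gauss s (ω * x) = gauss s x := by
  rw [gauss, map_mul, norm_ω, one_mul, gauss]

lemma gauss_ϖ_mul (s : ℝ) (x : EisensteinInt) : gauss s (ϖ * x) = gauss (3 * s) x := by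
  rw [gauss, map_mul, norm_ϖ, gauss]
  push_cast
  ring_nf

/-- The substitution `(a, b, w) ↦ (v₁, v₂, z)` for which the discrete Fourier transform of
`(1 + ϖa, 1 + ϖb, 1 + ϖ(-a - b) + ϖ²w)` is, up to units, `3` times
`(v₁, v₂, -1 - v₁ - v₂ + ϖz)`. -/
def fourierEquiv : EisensteinInt × EisensteinInt × EisensteinInt ≃
    EisensteinInt × EisensteinInt × EisensteinInt where
  toFun p := (ω * p.2.2 - ω * p.1 + p.2.1, ω * p.2.2 + p.1 - ω * p.2.1, p.1 + p.2.1 - ϖ * p.2.2)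
  invFun p := (ω * (p.1 - ω ^ 2 * (ϖ * p.2.2 - p.1 - p.2.1) - p.2.2),
    ω * (p.2.1 - ω ^ 2 * (ϖ * p.2.2 - p.1 - p.2.1) - p.2.2),
    ω ^ 2 * (ϖ * p.2.2 - p.1 - p.2.1))
  left_inv p := by
    obtain ⟨⟨a, b⟩, ⟨c, d⟩, ⟨e, f⟩⟩ := p
    ext <;> simp [ϖ, pow_two] <;> ring
  right_inv p := by
    obtain ⟨⟨a, b⟩, ⟨c, d⟩, ⟨e, f⟩⟩ := p
    ext <;> simp [ϖ, pow_two] <;> ring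

lemma norm_add_norm_add_norm_fourierEquiv (p : EisensteinInt × EisensteinInt × EisensteinInt) :
    (1 + ϖ * p.1).norm + (1 + ϖ * p.2.1).norm +
        (1 + ϖ * (-p.1 - p.2.1) + ϖ ^ 2 * p.2.2).norm =
      3 * ((fourierEquiv p).1.norm + (fourierEquiv p).2.1.norm +
        (-1 - (fourierEquiv p).1 - (fourierEquiv p).2.1 + ϖ * (fourierEquiv p).2.2).norm) := by
  simp only [norm_eq, fourierEquiv, Equiv.coe_fn_mk, ϖ, pow_two, QuadraticAlgebra.re_add,
    QuadraticAlgebra.re_one, QuadraticAlgebra.re_mul, QuadraticAlgebra.re_sub,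
    QuadraticAlgebra.omega_re, QuadraticAlgebra.im_sub, QuadraticAlgebra.im_one,
    QuadraticAlgebra.omega_im, QuadraticAlgebra.im_add, QuadraticAlgebra.im_mul,
    QuadraticAlgebra.re_neg, QuadraticAlgebra.im_neg]
  ring

lemma gauss_mul_gauss_mul_gauss_fourierEquiv (s : ℝ)
    (p : EisensteinInt × EisensteinInt × EisensteinInt) :
    gauss s (1 + ϖ * p.1) * (gauss s (1 + ϖ * p.2.1) *
        gauss s (1 + ϖ * (-p.1 - p.2.1) + ϖ ^ 2 * p.2.2)) =
      gauss (3 * s) (fourierEquiv p).1 * (gauss (3 * s) (fourierEquiv p).2.1 *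
        gauss (3 * s) (-1 - (fourierEquiv p).1 - (fourierEquiv p).2.1 +
          ϖ * (fourierEquiv p).2.2)) := by
  have h := congrArg (Int.cast : ℤ → ℝ) (norm_add_norm_add_norm_fourierEquiv p)
  push_cast at h
  simp only [gauss, ← ENNReal.ofReal_mul (Real.exp_nonneg _), ← Real.exp_add]
  congr 2
  linear_combination -s * h

lemma cosetSum_gauss_one_pow_three (s : ℝ) :
    cosetSum (gauss s) ϖ 1 ^ 3 = 9 * cosetSum (gauss (3 * s)) ϖ 1 *
      (cosetSum (gauss (3 * s)) ϖ 0 ^ 2 + cosetSum (gauss (3 * s)) ϖ 0 *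
        cosetSum (gauss (3 * s)) ϖ 1 + cosetSum (gauss (3 * s)) ϖ 1 ^ 2) := by
  set g := gauss s
  set g' := gauss (3 * s)
  have hcoset (a b : EisensteinInt) :
      cosetSum g (ϖ ^ 2) (1 + ϖ * (-a - b)) = cosetSum g (ϖ ^ 2) 1 :=
    cosetSum_ϖ_sq_one_add (gauss_ω_mul s) _
  calc cosetSum g ϖ 1 ^ 3
      = 3 * (cosetSum g ϖ 1 * (cosetSum g ϖ 1 * cosetSum g (ϖ ^ 2) 1)) := by
        rw [cosetSum_ϖ_one (gauss_ω_mul s)]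
        ring
    _ = 3 * ∑' a, ∑' b,
          g (1 + ϖ * a) * (g (1 + ϖ * b) * cosetSum g (ϖ ^ 2) (1 + ϖ * (-a - b))) := by
        simp only [hcoset, ENNReal.tsum_mul_left, ENNReal.tsum_mul_right]
        rfl
    _ = 3 * ∑' p : EisensteinInt × EisensteinInt × EisensteinInt,
          g (1 + ϖ * p.1) * (g (1 + ϖ * p.2.1) * g (1 + ϖ * (-p.1 - p.2.1) + ϖ ^ 2 * p.2.2)) := by
        simp only [ENNReal.tsum_prod', ENNReal.tsum_mul_left, cosetSum]
    _ = 3 * ∑' p : EisensteinInt × EisensteinInt × EisensteinInt,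
          g' p.1 * (g' p.2.1 * g' (-1 - p.1 - p.2.1 + ϖ * p.2.2)) := by
        rw [tsum_congr (gauss_mul_gauss_mul_gauss_fourierEquiv s), fourierEquiv.tsum_eq fun p =>
          g' p.1 * (g' p.2.1 * g' (-1 - p.1 - p.2.1 + ϖ * p.2.2))]
    _ = 3 * ∑' v, ∑' w, g' v * (g' w * cosetSum g' ϖ (-1 - v - w)) := by
        simp only [ENNReal.tsum_prod', ENNReal.tsum_mul_left, cosetSum]
    _ = _ := by
        rw [tsum_tsum_mul_cosetSum (gauss_neg _)]
        ring

end EisensteinInt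

lemma summable_exp_neg_mul_sq {s : ℝ} (hs : 0 < s) (x : ℝ) :
    Summable fun k : ℤ => Real.exp (-(s * (k + x) ^ 2)) := by
  refine (HurwitzKernelBounds.summable_f_int 0 x (div_pos hs Real.pi_pos)).congr fun k => ?_
  rw [HurwitzKernelBounds.f_int, pow_zero, one_mul]
  congr 1
  field_simp

lemma summable_exp_neg_add_mul_sq {s t : ℝ} (hs : 0 < s) (ht : 0 < t) (x y : ℝ) :
    Summable fun p : ℤ × ℤ => Real.exp (-(s * (p.1 + x) ^ 2 + t * (p.2 + y) ^ 2)) := by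
  simpa only [neg_add, Real.exp_add] using (summable_exp_neg_mul_sq hs x).mul_of_nonneg
    (summable_exp_neg_mul_sq ht y) (fun _ => Real.exp_nonneg _) (fun _ => Real.exp_nonneg _)

lemma summable_exp_neg_mul_hexagonal {s : ℝ} (hs : 0 < s) (x y : ℝ) :
    Summable fun p : ℤ × ℤ =>
      Real.exp (-(s * ((p.1 + x) ^ 2 + (p.1 + x) * (p.2 + y) + (p.2 + y) ^ 2))) := by
  refine (summable_exp_neg_add_mul_sq (half_pos hs) (half_pos hs) x y).of_nonneg_of_le
    (fun _ => Real.exp_nonneg _) fun p => Real.exp_le_exp.mpr ?_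
  nlinarith [mul_nonneg hs.le (sq_nonneg ((p.1 + x) + (p.2 + y)))]

lemma borA_exp_neg (s : ℝ) : borA (Real.exp (-s)) =
    ∑' p : ℤ × ℤ, Real.exp (-(s * ((p.1 : ℝ) ^ 2 + p.1 * p.2 + (p.2 : ℝ) ^ 2))) := by
  refine tsum_congr fun p => ?_
  rw [← Real.rpow_intCast, ← Real.exp_mul]
  push_cast
  ring_nf

lemma borB_exp_neg (s : ℝ) : borB (Real.exp (-s)) =
    (∑' p : ℤ × ℤ, Complex.exp (-(s * ((p.1 : ℂ) ^ 2 + p.1 * p.2 + (p.2 : ℂ) ^ 2)) +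
      2 * π * Complex.I * ((p.1 - p.2) / 3))).re := by
  refine congrArg Complex.re (tsum_congr fun p => ?_)
  rw [Complex.exp_add, Complex.ofReal_exp, ← Complex.exp_int_mul]
  push_cast
  ring_nf

lemma borC_exp_neg (s : ℝ) : borC (Real.exp (-s)) = ∑' p : ℤ × ℤ, Real.exp
    (-(s * ((p.1 + 1 / 3) ^ 2 + (p.1 + 1 / 3) * (p.2 + 1 / 3) + (p.2 + 1 / 3) ^ 2))) := by
  refine tsum_congr fun p => ?_
  rw [← Real.exp_mul, neg_mul]

lemma summable_borB {s : ℝ} (hs : 0 < s) : Summable fun p : ℤ × ℤ =>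
    Complex.exp (-(s * ((p.1 : ℂ) ^ 2 + p.1 * p.2 + (p.2 : ℂ) ^ 2)) +
      2 * π * Complex.I * ((p.1 - p.2) / 3)) := by
  refine Summable.of_norm ((summable_exp_neg_mul_hexagonal hs 0 0).congr fun p => ?_)
  rw [Complex.norm_exp]
  simp [pow_two]

namespace EisensteinInt

/-- The lattice coordinates `(k, l) ↦ k - l ω²`, which turn `k² + kl + l²` into the norm. -/
def ofCoords : ℤ × ℤ ≃ EisensteinInt where
  toFun p := ⟨p.1 + p.2, p.2⟩
  invFun x := (x.re - x.im, x.im)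
  left_inv p := by simp
  right_inv x := by simp

lemma norm_ofCoords (p : ℤ × ℤ) : (ofCoords p).norm = p.1 ^ 2 + p.1 * p.2 + p.2 ^ 2 := by
  rw [norm_eq, ofCoords, Equiv.coe_fn_mk]
  ring

lemma norm_one_add_ϖ_mul_ofCoords (p : ℤ × ℤ) : ((1 + ϖ * ofCoords p).norm : ℝ) =
    3 * ((p.1 + 1 / 3) ^ 2 + (p.1 + 1 / 3) * (p.2 + 1 / 3) + (p.2 + 1 / 3) ^ 2) := by
  rw [norm_eq, ϖ_mul, ofCoords, Equiv.coe_fn_mk]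
  simp only [QuadraticAlgebra.re_add, QuadraticAlgebra.im_add, QuadraticAlgebra.re_one,
    QuadraticAlgebra.im_one]
  push_cast
  ring

lemma tsum_gauss_ne_top {s : ℝ} (hs : 0 < s) : ∑' x, gauss s x ≠ ∞ := by
  rw [← ofCoords.tsum_eq]
  simp only [gauss, norm_ofCoords]
  simpa using (summable_exp_neg_mul_hexagonal hs 0 0).tsum_ofReal_ne_top

lemma cosetSum_gauss_ne_top {s : ℝ} (hs : 0 < s) (c : EisensteinInt) :
    cosetSum (gauss s) ϖ c ≠ ∞ :=
  ne_top_of_le_ne_top (tsum_gauss_ne_top hs)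
    (ENNReal.tsum_comp_le_tsum_of_injective (add_ϖ_mul_injective c) _)

lemma hasSum_exp_neg_norm_coset {s : ℝ} (hs : 0 < s) (c : EisensteinInt) :
    HasSum (fun y => Real.exp (-(s * (c + ϖ * y).norm))) (cosetSum (gauss s) ϖ c).toReal := by
  have h := ENNReal.hasSum_toReal (cosetSum_gauss_ne_top hs c)
  rw [← ENNReal.tsum_toReal_eq (f := fun y => gauss s (c + ϖ * y))
    fun _ => ENNReal.ofReal_ne_top] at h
  simpa only [cosetSum, gauss, ENNReal.toReal_ofReal (Real.exp_nonneg _)] using h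

lemma borA_exp_neg_eq_cosetSum {s : ℝ} (hs : 0 < s) : borA (Real.exp (-s)) =
    (cosetSum (gauss s) ϖ 0).toReal + 2 * (cosetSum (gauss s) ϖ 1).toReal := by
  have h := hasSum_of_hasSum_coset (f := fun x => Real.exp (-(s * x.norm)))
    fun j => hasSum_exp_neg_norm_coset hs j
  rw [← ofCoords.hasSum_iff] at h
  rw [borA_exp_neg]
  convert h.tsum_eq using 1
  · simp [norm_ofCoords]
  · simp only [sum_signType, SignType.coe_zero, SignType.coe_neg_one, SignType.coe_one,
      cosetSum_neg (gauss_neg s)]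
    ring

lemma cos_add_ϖ_mul (j : SignType) (y : EisensteinInt) :
    Real.cos (2 * π * ((((j + ϖ * y).re : ℝ) - 2 * (j + ϖ * y).im) / 3)) =
      Real.cos (2 * π / 3 * (j : ℝ)) := by
  rw [← Real.cos_add_int_mul_two_pi (2 * π / 3 * j) (y.re - y.im), ϖ_mul]
  congr 1
  cases j <;> simp <;> ring

lemma borB_exp_neg_eq_cosetSum {s : ℝ} (hs : 0 < s) : borB (Real.exp (-s)) =
    (cosetSum (gauss s) ϖ 0).toReal - (cosetSum (gauss s) ϖ 1).toReal := by
  have hcos : Real.cos (2 * π / 3) = -1 / 2 := by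
    rw [show 2 * π / 3 = π - π / 3 by ring, Real.cos_pi_sub,
      Real.cos_pi_div_three, neg_div]
  have h := hasSum_of_hasSum_coset
    (f := fun x => Real.exp (-(s * x.norm)) * Real.cos (2 * π * ((x.re - 2 * x.im) / 3)))
    fun j => by
      simpa only [cos_add_ϖ_mul] using (hasSum_exp_neg_norm_coset hs j).mul_right
        (Real.cos (2 * π / 3 * (j : ℝ)))
  rw [← ofCoords.hasSum_iff] at h
  rw [borB_exp_neg, Complex.re_tsum (summable_borB hs)]
  convert h.tsum_eq using 1
  · refine tsum_congr fun p => ?_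
    have hexponent : -(s * ((p.1 : ℂ) ^ 2 + p.1 * p.2 + (p.2 : ℂ) ^ 2)) +
        2 * π * Complex.I * ((p.1 - p.2) / 3) =
        (-(s * (ofCoords p).norm) : ℝ) + (2 * π * ((p.1 - p.2) / 3) : ℝ) * Complex.I := by
      rw [norm_ofCoords]
      push_cast
      ring
    rw [hexponent, ← Complex.mk_eq_add_mul_I, Complex.exp_re]
    simp only [Function.comp_apply, ofCoords, Equiv.coe_fn_mk]
    push_cast
    ring_nf
  · simp only [sum_signType, SignType.coe_zero, SignType.coe_neg_one, SignType.coe_one,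
      cosetSum_neg (gauss_neg s), mul_zero, Real.cos_zero, mul_neg, mul_one, Real.cos_neg, hcos]
    ring

lemma borC_exp_neg_eq_cosetSum {s : ℝ} (hs : 0 < s) : borC (Real.exp (-s)) =
    (cosetSum (gauss (s / 3)) ϖ 1).toReal := by
  have h := hasSum_exp_neg_norm_coset (div_pos hs three_pos) 1
  rw [← ofCoords.hasSum_iff] at h
  rw [borC_exp_neg, ← h.tsum_eq]
  refine tsum_congr fun p => ?_
  rw [Function.comp_apply, norm_one_add_ϖ_mul_ofCoords]
  ring_nf

end EisensteinInt

open EisensteinInt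

lemma exists_exp_neg_eq {q : ℝ} (hq : 0 < q) (hq_lt : q < 1) : ∃ s, 0 < s ∧ Real.exp (-s) = q :=
  ⟨-Real.log q, neg_pos.mpr (Real.log_neg hq hq_lt), by rw [neg_neg, Real.exp_log hq]⟩

lemma borA_pos {q : ℝ} (hq : 0 < q) (hq_lt : q < 1) : 0 < borA q := by
  obtain ⟨s, hs, rfl⟩ := exists_exp_neg_eq hq hq_lt
  rw [borA_exp_neg]
  exact Summable.tsum_pos (by simpa using summable_exp_neg_mul_hexagonal hs 0 0)
    (fun _ => Real.exp_nonneg _) 0 (Real.exp_pos _)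

lemma borC_nonneg {q : ℝ} (hq : 0 ≤ q) : 0 ≤ borC q :=
  tsum_nonneg fun _ => Real.rpow_nonneg hq _

theorem borA_pow_three {q : ℝ} (hq : 0 < q) (hq_lt : q < 1) :
    borA q ^ 3 = borB q ^ 3 + borC q ^ 3 := by
  obtain ⟨s, hs, rfl⟩ := exists_exp_neg_eq hq hq_lt
  have h := cosetSum_gauss_one_pow_three (s / 3)
  rw [mul_div_cancel₀ s three_ne_zero] at h
  rw [borA_exp_neg_eq_cosetSum hs, borB_exp_neg_eq_cosetSum hs, borC_exp_neg_eq_cosetSum hs]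
  lift cosetSum (gauss s) ϖ 0 to ℝ≥0 using cosetSum_gauss_ne_top hs 0 with A
  lift cosetSum (gauss s) ϖ 1 to ℝ≥0 using cosetSum_gauss_ne_top hs 1 with C
  lift cosetSum (gauss (s / 3)) ϖ 1 to ℝ≥0 using
    cosetSum_gauss_ne_top (div_pos hs three_pos) 1 with c
  have h_cubic : (c : ℝ) ^ 3 = 9 * C * (A ^ 2 + A * C + C ^ 2) := by exact_mod_cast h
  simp only [ENNReal.coe_toReal]
  linear_combination -h_cubic

section Duality

open Complex

lemma tsum_prod_eq_tsum_tsum_swap {α β : Type*} {f : α × β → ℂ} (hf : Summable f) :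
    ∑' p, f p = ∑' b, ∑' a, f (a, b) :=
  hf.tsum_prod.trans (Summable.tsum_comm (f := fun a b => f (a, b)) hf).symm

lemma tsum_exp_neg_mul_add_sq {s : ℝ} (hs : 0 < s) (x y : ℝ) :
    ∑' k : ℤ, cexp (-(s * (k + x) ^ 2) + 2 * π * I * k * y) =
      √(π / s) * ∑' m : ℤ,
        cexp (-(π ^ 2 / s * (m - y) ^ 2) + 2 * π * I * x * (m - y)) := by
  have hs' : (s : ℂ) ≠ 0 := ofReal_ne_zero.mpr hs.ne'
  have hπ : (π : ℂ) ≠ 0 := ofReal_ne_zero.mpr Real.pi_ne_zero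
  have hroot : 1 / ((s / π : ℝ) : ℂ) ^ (1 / 2 : ℂ) = (√(π / s) : ℝ) := by
    rw [← inv_div s π, Real.sqrt_inv, Real.sqrt_eq_rpow, ofReal_inv,
      ofReal_cpow (div_pos hs Real.pi_pos).le, one_div]
    norm_num
  have hpoisson := tsum_exp_neg_quadratic (a := ((s / π : ℝ) : ℂ))
    (by rw [ofReal_re]; exact div_pos hs Real.pi_pos) (-(s * x / π) + I * y)
  calc ∑' k : ℤ, cexp (-(s * (k + x) ^ 2) + 2 * π * I * k * y)
      = cexp (-(s * x ^ 2)) * ∑' k : ℤ, cexp (-π * (s / π : ℝ) * k ^ 2 +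
          2 * π * (-(s * x / π) + I * y) * k) := by
        rw [← tsum_mul_left]
        refine tsum_congr fun k => ?_
        rw [← Complex.exp_add]
        push_cast
        field_simp
        ring_nf
    _ = √(π / s) * (cexp (-(s * x ^ 2)) * ∑' m : ℤ, cexp (-π / (s / π : ℝ) *
          (m + I * (-(s * x / π) + I * y)) ^ 2)) := by
        rw [hpoisson, hroot, mul_left_comm]
    _ = _ := by
        rw [← tsum_mul_left]
        refine congrArg _ (tsum_congr fun m => ?_)
        rw [← Complex.exp_add]
        push_cast
        field_simp
        ring_nf
        simp only [I_sq, show I ^ 3 = -I by rw [pow_succ, I_sq]; ring, I_pow_four]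
        ring_nf

/-- The double series obtained from the series of both `b` and `c` by Poisson summation in one of
the two variables. -/
noncomputable def mixedTheta (u v : ℝ) : ℂ :=
  ∑' p : ℤ × ℤ, cexp (-(u * p.1 ^ 2 + v * (p.2 + 1 / 3) ^ 2) + π * I * p.1 * (p.2 + 1))

lemma summable_mixedTheta {u v : ℝ} (hu : 0 < u) (hv : 0 < v) : Summable fun p : ℤ × ℤ =>
    cexp (-(u * p.1 ^ 2 + v * (p.2 + 1 / 3) ^ 2) + π * I * p.1 * (p.2 + 1)) := by
  refine Summable.of_norm ((summable_exp_neg_add_mul_sq hu hv 0 (1 / 3)).congr fun p => ?_)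
  rw [Complex.norm_exp]
  simp [pow_two]

lemma borB_exp_neg_eq_mixedTheta {s : ℝ} (hs : 0 < s) : borB (Real.exp (-s)) =
    (√(π / s) * mixedTheta (3 * s / 4) (π ^ 2 / s)).re := by
  rw [borB_exp_neg, tsum_prod_eq_tsum_tsum_swap (summable_borB hs), mixedTheta,
    ← (Equiv.neg (ℤ × ℤ)).tsum_eq, Summable.tsum_prod, ← tsum_mul_left]
  · refine congrArg re (tsum_congr fun l => ?_)
    have hpoisson := tsum_exp_neg_mul_add_sq hs (l / 2) (1 / 3)
    calc _ = cexp (-(3 * s / 4 * l ^ 2) - 2 * π * I * l / 3) *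
          ∑' k : ℤ, cexp (-(s * (k + (l / 2 : ℝ)) ^ 2) + 2 * π * I * k * (1 / 3 : ℝ)) := by
            rw [← tsum_mul_left]
            refine tsum_congr fun k => ?_
            rw [← Complex.exp_add]
            push_cast
            ring_nf
      _ = _ := by
        rw [hpoisson, mul_left_comm, ← tsum_mul_left]
        refine congrArg _ (tsum_congr fun m => ?_)
        rw [← Complex.exp_add]
        simp only [Equiv.neg_apply, Prod.neg_mk]
        push_cast
        ring_nf
  · exact (Equiv.neg (ℤ × ℤ)).summable_iff.mpr (summable_mixedTheta (by positivity) (by positivity))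

lemma ofReal_borC_exp_neg_eq_mixedTheta {s : ℝ} (hs : 0 < s) : (borC (Real.exp (-s)) : ℂ) =
    √(π / s) * mixedTheta (π ^ 2 / s) (3 * s / 4) := by
  rw [borC_exp_neg, ofReal_tsum, tsum_prod_eq_tsum_tsum_swap, mixedTheta,
    tsum_prod_eq_tsum_tsum_swap, ← tsum_mul_left]
  · refine tsum_congr fun l => ?_
    have hpoisson := tsum_exp_neg_mul_add_sq hs ((l + 1) / 2) 0
    calc _ = cexp (-(3 * s / 4 * (l + 1 / 3) ^ 2)) * ∑' k : ℤ,
          cexp (-(s * (k + ((l + 1) / 2 : ℝ)) ^ 2) + 2 * π * I * k * (0 : ℝ)) := by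
            rw [← tsum_mul_left]
            refine tsum_congr fun k => ?_
            rw [← Complex.exp_add]
            push_cast
            ring_nf
      _ = _ := by
        rw [hpoisson, mul_left_comm, ← tsum_mul_left]
        refine congrArg _ (tsum_congr fun m => ?_)
        rw [← Complex.exp_add]
        push_cast
        ring_nf
  · exact summable_mixedTheta (by positivity) (by positivity)
  · exact ofRealCLM.summable (summable_exp_neg_mul_hexagonal hs (1 / 3) (1 / 3))

theorem borB_exp_neg_eq_mul_borC {s : ℝ} (hs : 0 < s) : borB (Real.exp (-s)) =
    2 * π / (√3 * s) * borC (Real.exp (-(4 * π ^ 2 / (3 * s)))) := by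
  have hC := ofReal_borC_exp_neg_eq_mixedTheta (s := 4 * π ^ 2 / (3 * s)) (by positivity)
  have hπ := Real.pi_ne_zero
  have hu : π ^ 2 / (4 * π ^ 2 / (3 * s)) = 3 * s / 4 := by field_simp
  have hv : 3 * (4 * π ^ 2 / (3 * s)) / 4 = π ^ 2 / s := by field_simp
  have hroot : √(π / s) =
      2 * π / (√3 * s) * √(π / (4 * π ^ 2 / (3 * s))) := by
    have hfactor : 0 ≤ 2 * π / (√3 * s) := by positivity
    rw [← Real.sqrt_sq hfactor, ← Real.sqrt_mul (sq_nonneg _), div_pow, mul_pow √3,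
      Real.sq_sqrt zero_le_three]
    congr 1
    field_simp
    norm_num
  rw [hu, hv] at hC
  rw [borB_exp_neg_eq_mixedTheta hs, hroot, ofReal_mul, mul_assoc, ← hC, ← ofReal_mul, ofReal_re]

end Duality

lemma borB_exp_eq_borC_exp : borB (Real.exp (-2 * π / √3)) = borC (Real.exp (-2 * π / √3)) := by
  have h := borB_exp_neg_eq_mul_borC (s := 2 * π / √3) (by positivity)
  have hfactor : 2 * π / (√3 * (2 * π / √3)) = 1 := by field_simp
  have hdual : 4 * π ^ 2 / (3 * (2 * π / √3)) = 2 * π / √3 := by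
    field_simp
    norm_num
  rwa [hfactor, hdual, one_mul, ← neg_div, ← neg_mul] at h

theorem hexagonal_temperature_ratio :
    borB (Real.exp (-2 * Real.pi / Real.sqrt 3)) / borA (Real.exp (-2 * Real.pi / Real.sqrt 3)) =
      (2 : ℝ) ^ (-(1/3) : ℝ) := by
  have hbc := borB_exp_eq_borC_exp
  set q := Real.exp (-2 * Real.pi / Real.sqrt 3)
  have hq : 0 < q := Real.exp_pos _
  have hq_lt : q < 1 := Real.exp_lt_one_iff.mpr <|
    div_neg_of_neg_of_pos (by linarith [Real.pi_pos]) (by positivity)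
  have ha : 0 < borA q := borA_pos hq hq_lt
  have hb : 0 ≤ borB q := hbc ▸ borC_nonneg hq.le
  have hcubic : borA q ^ 3 = 2 * borB q ^ 3 := by
    rw [borA_pow_three hq hq_lt, ← hbc, two_mul]
  have hratio : (borB q / borA q) ^ 3 = 2⁻¹ := by
    rw [div_pow, div_eq_iff (pow_pos ha 3).ne', hcubic, inv_mul_cancel_left₀ two_ne_zero]
  rw [Real.rpow_neg_eq_inv_rpow, one_div,
    Real.eq_rpow_inv (div_nonneg hb ha.le) (by norm_num) three_ne_zero]
  exact_mod_cast hratio
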